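/- arXiv:2405.08708 — 2 statements merged into one kernel-verified Lean document; each statement's English description precedes it below -/
import Mathlib

section
/- With the conditional Chen–Stein setup (finite index set I, sub-σ-field 𝒜, Bernoulli random variables X_α, neighbourhoods B_α ∋ α, S = Σ_{α∈I} X_α, and the 𝒜-measurable quantities b_1, b_2, b_3 defined below): if T_𝒜 is a random variable whose conditional distribution given 𝒜 is Poisson with (random) parameter E[S | 𝒜], then the total variation distance between S and T_𝒜 satisfies d_TV(S, T_𝒜) ≤ E[min(1, b_1 + b_2 + b_3)]. -/
/-!
The proof is Stein's method for the Poisson law, run conditionally on `𝒜`.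

For a bounded `g : ℕ → ℝ` the Stein equation `l * F k - k * F (k - 1) = g k - Poi(l)(g)` is solved
through the immigration-death semigroup: with `u = exp (-t)`,
`F k = -∫₀¹ E[g (N + 1) - g N] du`, where `N = Bin(k, u) + Poi(l (1 - u))`. The map
`u ↦ E g(N)` runs from `Poi(l)(g)` at `u = 0` to `g k` at `u = 1`, and its derivative is
`k E[Δg(Bin(k - 1, u) + Poi)] - l E[Δg(Bin(k, u) + Poi)]`, so the fundamental theorem of calculus
gives the equation (`steinSol_eq`). If `0 ≤ g ≤ 1`, then `|Δg| ≤ 1` yields `|F| ≤ 1`, and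
`F (k + 1) - F k = -∫₀¹ u E[Δ²g(N)] du` with `|Δ²g| ≤ 2` yields `|ΔF| ≤ 1`. This formula makes
sense at `l = 0` and is continuous in `l`, so a random `𝒜`-measurable `l` may be substituted.

With `l = E[S | 𝒜] = ∑ p_α` and `V_α = ∑_{β ∉ B_α} X_β`, the bound on `ΔF` shows that
`g(S) - Poi(l)(g)` differs from `∑_α F(V_α) (p_α - X_α)` by at most
`∑_α ∑_{β ∈ B_α} p_α X_β + ∑_α ∑_{β ∈ B_α, β ≠ α} X_α X_β` (`stein_pointwise`), whose conditional
expectation is `b₁ + b₂`. Conditioning first on `σ(𝒜, X_β : β ∉ B_α)` bounds the remaining sum by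
`b₃`. Hence `|E[g(S) - Poi(l)(g) | 𝒜]| ≤ min 1 (b₁ + b₂ + b₃)` almost surely; integrating gives the
bound for `g` the indicator of a bounded set, and an arbitrary set is an increasing limit of these.
-/

open MeasureTheory ProbabilityTheory Filter

noncomputable section

namespace ChenStein

variable {Ω : Type*} {I : Type*} [Fintype I] [DecidableEq I]

/-- Total variation distance between two (laws of) `ℕ`-valued random variables. -/
def dTVNat (μ ν : Measure ℕ) : ℝ := ⨆ A : Set ℕ, |(μ A).toReal - (ν A).toReal|

/-- `pA m𝒜 P X α = E[X_α | 𝒜]`, the conditional expectation of the Bernoulli variable `X α`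
given the sub-σ-field `m𝒜`. -/
def pA (m𝒜 : MeasurableSpace Ω) {mΩ : MeasurableSpace Ω} (P : Measure Ω)
    (X : I → Ω → ℕ) (α : I) : Ω → ℝ :=
  P[fun ω => (X α ω : ℝ)|m𝒜]

/-- `b₁ = ∑_{α} ∑_{β ∈ B_α} p_α p_β` (an `𝒜`-measurable random quantity). -/
def b1 (m𝒜 : MeasurableSpace Ω) {mΩ : MeasurableSpace Ω} (P : Measure Ω)
    (X : I → Ω → ℕ) (B : I → Finset I) (ω : Ω) : ℝ :=
  ∑ α : I, ∑ β ∈ B α, pA m𝒜 P X α ω * pA m𝒜 P X β ω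

/-- `b₂ = ∑_{α} ∑_{β ∈ B_α, β ≠ α} p_{αβ}` with `p_{αβ} = E[X_α X_β | 𝒜]`. -/
def b2 (m𝒜 : MeasurableSpace Ω) {mΩ : MeasurableSpace Ω} (P : Measure Ω)
    (X : I → Ω → ℕ) (B : I → Finset I) (ω : Ω) : ℝ :=
  ∑ α : I, ∑ β ∈ (B α).erase α, (P[fun ω' => ((X α ω' * X β ω' : ℕ) : ℝ)|m𝒜]) ω

/-- The σ-field `σ(𝒜, X_β : β ∈ B_αᶜ)`. -/
def sigmaB (m𝒜 : MeasurableSpace Ω) (X : I → Ω → ℕ) (Bα : Finset I) : MeasurableSpace Ω :=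
  m𝒜 ⊔ ⨆ (β : I) (_ : β ∉ Bα), MeasurableSpace.comap (X β) inferInstance

/-- `b₃ = ∑_α E[ |E[X_α - p_α | σ(𝒜, X_β : β ∈ B_αᶜ)]| | 𝒜]`. -/
def b3 (m𝒜 : MeasurableSpace Ω) {mΩ : MeasurableSpace Ω} (P : Measure Ω)
    (X : I → Ω → ℕ) (B : I → Finset I) (ω : Ω) : ℝ :=
  ∑ α : I,
    (P[fun ω' =>
        abs ((P[fun ω'' => (X α ω'' : ℝ) - pA m𝒜 P X α ω''|sigmaB m𝒜 X (B α)]) ω')|m𝒜]) ω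

/-- `condMean m𝒜 P X = E[S | 𝒜]` for `S = ∑_α X_α`. -/
def condMean (m𝒜 : MeasurableSpace Ω) {mΩ : MeasurableSpace Ω} (P : Measure Ω)
    (X : I → Ω → ℕ) : Ω → ℝ :=
  P[fun ω => ((∑ α : I, X α ω : ℕ) : ℝ)|m𝒜]

end ChenStein

end

noncomputable section

namespace ChenStein

/-! ### Solving the Stein equation -/

/-- The expectation of `g` under the Poisson law of parameter `x`, truncated to `{0, …, M}`. It is
the full expectation when `g` vanishes beyond `M`, the only case in which it is used as such. -/
def poisE (M : ℕ) (x : ℝ) (g : ℕ → ℝ) : ℝ :=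
  ∑ j ∈ Finset.range (M + 1), Real.exp (-x) * x ^ j / j.factorial * g j

/-- `E g(Bin(k, u) + Poi(l (1 - u)))` with the two variables independent, built by adding one
Bernoulli(`u`) trial at a time; the Poisson part is truncated to `{0, …, M}`. -/
def binPois (M : ℕ) (l : ℝ) : ℕ → ℝ → (ℕ → ℝ) → ℝ
  | 0, u, g => poisE M (l * (1 - u)) g
  | k + 1, u, g => u * binPois M l k u (fun n => g (n + 1)) + (1 - u) * binPois M l k u g

/-- The forward difference `Δg`. -/
def fdiff (g : ℕ → ℝ) (n : ℕ) : ℝ := g (n + 1) - g n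

/-- The solution of the Stein equation for `g` and the Poisson law of parameter `l`, shifted by one:
the value at `k` is the classical solution at `k + 1`. Here `g` is meant to vanish beyond `M`. -/
def steinSol (M : ℕ) (g : ℕ → ℝ) (l : ℝ) (k : ℕ) : ℝ :=
  -∫ u in (0 : ℝ)..1, binPois M l k u (fdiff g)

/-- The Poisson semigroup has generator `Δ`; the correction term comes from the truncation at `M`
and disappears when `g (M + 1) = 0`. -/
lemma poisE_hasDerivAt (M : ℕ) (x : ℝ) (g : ℕ → ℝ) :
    HasDerivAt (fun x => poisE M x g)
      (poisE M x (fdiff g) - Real.exp (-x) * x ^ M / M.factorial * g (M + 1)) x := by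
  induction M with
  | zero =>
    have h : HasDerivAt (fun x : ℝ => Real.exp (-x) * g 0) (Real.exp (-x) * (-1) * g 0) x :=
      ((Real.hasDerivAt_exp _).comp x (hasDerivAt_neg x)).mul_const _
    convert h using 1
    · funext x; simp [poisE]
    · simp [poisE, fdiff]; ring
  | succ M ih =>
    have h : HasDerivAt (fun x : ℝ => Real.exp (-x) * x ^ (M + 1) / (M + 1).factorial * g (M + 1))
        ((Real.exp (-x) * (-1) * x ^ (M + 1) + Real.exp (-x) * (((M + 1 : ℕ) : ℝ) * x ^ M)) /
          (M + 1).factorial * g (M + 1)) x := by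
      have h1 := ((Real.hasDerivAt_exp _).comp x (hasDerivAt_neg x)).mul (hasDerivAt_pow (M + 1) x)
      exact (h1.div_const _).mul_const _
    have e : (fun x => poisE (M + 1) x g) = fun x => poisE M x g +
        Real.exp (-x) * x ^ (M + 1) / (M + 1).factorial * g (M + 1) := by
      funext x; simp only [poisE]; rw [Finset.sum_range_succ]
    rw [e]
    refine (ih.add h).congr_deriv ?_
    · simp only [poisE]
      rw [Finset.sum_range_succ _ (M + 1)]
      have : (M.factorial : ℝ) ≠ 0 := by positivity
      simp only [fdiff, Nat.factorial_succ]
      push_cast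
      field_simp
      ring

lemma binPois_sub (M : ℕ) (l : ℝ) (k : ℕ) (u : ℝ) (g h : ℕ → ℝ) :
    binPois M l k u (fun n => g n - h n) = binPois M l k u g - binPois M l k u h := by
  induction k generalizing g h with
  | zero => simp only [binPois, poisE, mul_sub, Finset.sum_sub_distrib]
  | succ k ih => simp only [binPois, ih]; ring

lemma binPois_succ_sub (M : ℕ) (l : ℝ) (k : ℕ) (u : ℝ) (g : ℕ → ℝ) :
    binPois M l (k + 1) u g - binPois M l k u g = u * binPois M l k u (fdiff g) := by
  have := binPois_sub M l k u (fun n => g (n + 1)) g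
  change binPois M l k u (fdiff g) = _ at this
  rw [this]; simp only [binPois]; ring

lemma abs_poisE_le (M : ℕ) {x : ℝ} (hx : 0 ≤ x) {g : ℕ → ℝ} {C : ℝ} (hg : ∀ n, |g n| ≤ C) :
    |poisE M x g| ≤ C := by
  have hC : 0 ≤ C := (abs_nonneg _).trans (hg 0)
  calc |poisE M x g| ≤ ∑ j ∈ Finset.range (M + 1), Real.exp (-x) * (x ^ j / j.factorial) * C := by
        refine (Finset.abs_sum_le_sum_abs _ _).trans (Finset.sum_le_sum fun j _ => ?_)
        rw [abs_mul, abs_of_nonneg (by positivity), mul_div_assoc]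
        exact mul_le_mul_of_nonneg_left (hg j) (by positivity)
    _ = Real.exp (-x) * (∑ j ∈ Finset.range (M + 1), x ^ j / j.factorial) * C := by
        rw [Finset.mul_sum, Finset.sum_mul]
    _ ≤ Real.exp (-x) * Real.exp x * C := by
        gcongr
        exact Real.sum_le_exp_of_nonneg hx _
    _ = C := by rw [← Real.exp_add]; simp

lemma abs_binPois_le (M : ℕ) {l : ℝ} (hl : 0 ≤ l) (k : ℕ) {u : ℝ} (hu : 0 ≤ u) (hu1 : u ≤ 1)
    {g : ℕ → ℝ} {C : ℝ} (hg : ∀ n, |g n| ≤ C) : |binPois M l k u g| ≤ C := by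
  induction k generalizing g with
  | zero => exact abs_poisE_le M (mul_nonneg hl (by linarith)) hg
  | succ k ih =>
    have h1 := ih (g := fun n => g (n + 1)) (fun n => hg _)
    have h2 := ih hg
    simp only [binPois]
    rw [abs_le] at *
    constructor <;> nlinarith

lemma continuous_binPois (M : ℕ) (k : ℕ) (g : ℕ → ℝ) :
    Continuous fun q : ℝ × ℝ => binPois M q.1 k q.2 g := by
  induction k generalizing g with
  | zero => simp only [binPois, poisE]; fun_prop
  | succ k ih =>
    have h1 := ih g
    have h2 := ih (fun n => g (n + 1))
    simp only [binPois]; fun_prop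

lemma continuous_binPois' (M : ℕ) (l : ℝ) (k : ℕ) (g : ℕ → ℝ) :
    Continuous fun u : ℝ => binPois M l k u g :=
  (continuous_binPois M k g).comp (by fun_prop : Continuous fun u : ℝ => (l, u))

/-- The Kolmogorov equation of the immigration-death process in the variable `u = exp (-t)`. At
`k = 0` the truncated `k - 1` is harmless, being multiplied by `k`. -/
lemma binPois_hasDerivAt (M : ℕ) (l : ℝ) (k : ℕ) (u : ℝ) {g : ℕ → ℝ} (hg : ∀ n, M < n → g n = 0) :
    HasDerivAt (fun u => binPois M l k u g)
      (k * binPois M l (k - 1) u (fdiff g) - l * binPois M l k u (fdiff g)) u := by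
  induction k generalizing g with
  | zero =>
    have h1 : HasDerivAt (fun u : ℝ => l * (1 - u)) (l * (-1)) u :=
      ((hasDerivAt_id u).const_sub 1).const_mul l
    have h2 := (poisE_hasDerivAt M (l * (1 - u)) g).comp u h1
    rw [hg (M + 1) (by omega)] at h2
    refine h2.congr_deriv ?_
    simp only [binPois]; push_cast; ring
  | succ k ih =>
    have h1 := (hasDerivAt_id u).mul (ih (g := fun n => g (n + 1)) (fun n hn => hg _ (by omega)))
    have h2 := ((hasDerivAt_id u).const_sub 1).mul (ih hg)
    refine (h1.add h2).congr_deriv ?_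
    have e : fdiff (fun n => g (n + 1)) = fun n => fdiff g (n + 1) := rfl
    have e2 := binPois_sub M l k u (fun n => g (n + 1)) g
    change binPois M l k u (fdiff g) = _ at e2
    rw [e]
    cases k with
    | zero =>
      simp only [Nat.zero_sub, Nat.add_sub_cancel, id]
      rw [show binPois M l (0 + 1) u (fdiff g) = u * binPois M l 0 u
        (fun n => fdiff g (n + 1)) + (1 - u) * binPois M l 0 u (fdiff g) from rfl]
      push_cast
      linear_combination -e2
    | succ k =>
      simp only [Nat.add_sub_cancel, id] at *
      rw [show binPois M l (k + 1 + 1) u (fdiff g) = u * binPois M l (k + 1) u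
        (fun n => fdiff g (n + 1)) + (1 - u) * binPois M l (k + 1) u (fdiff g) from rfl]
      have e3 : binPois M l (k + 1) u (fdiff g) = u * binPois M l k u
        (fun n => fdiff g (n + 1)) + (1 - u) * binPois M l k u (fdiff g) := rfl
      push_cast
      linear_combination -e2 - (k + 1 : ℝ) * e3

lemma binPois_zero_right (M : ℕ) (l : ℝ) (k : ℕ) (g : ℕ → ℝ) :
    binPois M l k 0 g = poisE M l g := by
  induction k with
  | zero => simp [binPois]
  | succ k ih => simp [binPois, ih]

lemma binPois_one_right (M : ℕ) (l : ℝ) (k : ℕ) (g : ℕ → ℝ) :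
    binPois M l k 1 g = g k := by
  induction k generalizing g with
  | zero =>
    simp only [binPois, poisE, sub_self, mul_zero]
    rw [Finset.sum_eq_single 0] <;> simp +contextual
  | succ k ih => simp [binPois, ih]

lemma steinSol_eq (M : ℕ) {g : ℕ → ℝ} (hg : ∀ n, M < n → g n = 0) (l : ℝ) (k : ℕ) :
    l * steinSol M g l k - k * steinSol M g l (k - 1) = g k - poisE M l g := by
  have hc := fun k => continuous_binPois' M l k (fdiff g)
  have h := intervalIntegral.integral_eq_sub_of_hasDerivAt (a := 0) (b := 1)
    (fun u _ => binPois_hasDerivAt M l k u hg)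
    ((((hc (k - 1)).const_mul _).sub ((hc k).const_mul _)).intervalIntegrable _ _)
  rw [binPois_zero_right, binPois_one_right, intervalIntegral.integral_sub
    (((hc (k - 1)).const_mul _).intervalIntegrable _ _)
    (((hc k).const_mul _).intervalIntegrable _ _),
    intervalIntegral.integral_const_mul, intervalIntegral.integral_const_mul] at h
  rw [← h]; simp only [steinSol]; ring

lemma abs_fdiff_le {g : ℕ → ℝ} (h0 : ∀ n, 0 ≤ g n) (h1 : ∀ n, g n ≤ 1) (n : ℕ) :
    |fdiff g n| ≤ 1 := by
  have := h0 n; have := h1 n; have := h0 (n+1); have := h1 (n+1)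
  rw [abs_le]; unfold fdiff; constructor <;> linarith

lemma abs_steinSol_le (M : ℕ) {g : ℕ → ℝ} (h0 : ∀ n, 0 ≤ g n) (h1 : ∀ n, g n ≤ 1)
    {l : ℝ} (hl : 0 ≤ l) (k : ℕ) : |steinSol M g l k| ≤ 1 := by
  rw [steinSol, abs_neg, ← Real.norm_eq_abs]
  refine (intervalIntegral.norm_integral_le_of_norm_le_const (C := 1) fun u hu => ?_).trans
    (by simp)
  rw [Set.uIoc_of_le zero_le_one] at hu
  exact abs_binPois_le M hl k hu.1.le hu.2 (abs_fdiff_le h0 h1)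

/-- The increments of the solution are controlled by second differences: `∫₀¹ 2 u du = 1`. -/
lemma abs_steinSol_succ_sub_le (M : ℕ) {g : ℕ → ℝ} (h0 : ∀ n, 0 ≤ g n) (h1 : ∀ n, g n ≤ 1)
    {l : ℝ} (hl : 0 ≤ l) (k : ℕ) : |steinSol M g l (k + 1) - steinSol M g l k| ≤ 1 := by
  have hc := fun k => (continuous_binPois' M l k (fdiff g)).intervalIntegrable (μ := volume) 0 1
  have e : steinSol M g l (k + 1) - steinSol M g l k =
      -∫ u in (0 : ℝ)..1, u * binPois M l k u (fdiff (fdiff g)) := by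
    simp only [← binPois_succ_sub]
    rw [intervalIntegral.integral_sub (hc _) (hc _)]
    simp only [steinSol]; ring
  have hdd : ∀ n, |fdiff (fdiff g) n| ≤ 2 := fun n => by
    have a := abs_fdiff_le h0 h1 n
    have b := abs_fdiff_le h0 h1 (n + 1)
    rw [abs_le] at *
    unfold fdiff at *
    constructor <;> linarith
  rw [e, abs_neg, ← Real.norm_eq_abs]
  refine (intervalIntegral.norm_integral_le_of_norm_le (g := fun u => u * 2) zero_le_one
    (ae_of_all _ fun u hu => ?_)
    ((by fun_prop : Continuous fun u : ℝ => u * 2).intervalIntegrable _ _)).trans ?_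
  · rw [norm_mul, Real.norm_of_nonneg hu.1.le]
    exact mul_le_mul_of_nonneg_left (abs_binPois_le M hl k hu.1.le hu.2 hdd) hu.1.le
  · rw [intervalIntegral.integral_mul_const, integral_id]; norm_num

lemma abs_steinSol_add_sub_le (M : ℕ) {g : ℕ → ℝ} (h0 : ∀ n, 0 ≤ g n) (h1 : ∀ n, g n ≤ 1)
    {l : ℝ} (hl : 0 ≤ l) (k m : ℕ) : |steinSol M g l (k + m) - steinSol M g l k| ≤ m := by
  induction m with
  | zero => simp
  | succ m ih =>
    have h := abs_steinSol_succ_sub_le M h0 h1 hl (k + m)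
    rw [← add_assoc]
    push_cast
    rw [abs_le] at *
    constructor <;> linarith

lemma measurable_steinSol (M : ℕ) (g : ℕ → ℝ) :
    Measurable fun q : ℝ × ℕ => steinSol M g q.1 q.2 := by
  refine measurable_from_prod_countable_left fun k => ?_
  have : Continuous fun l => ∫ u in (0 : ℝ)..1, binPois M l k u (fdiff g) :=
    intervalIntegral.continuous_parametric_intervalIntegral_of_continuous'
      (continuous_binPois M k (fdiff g)) 0 1
  exact this.neg.measurable
/-! ### The Stein identity for sums of indicators -/

/-- The estimate behind `b₃`: condition on the larger σ-field first, where the bounded weight `W`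
can be pulled out. -/
lemma condExp_mul_abs_le {Ω : Type*} {m m' mΩ : MeasurableSpace Ω} (hm : m ≤ m') (hm' : m' ≤ mΩ)
    (P : Measure Ω) [IsProbabilityMeasure P] {W Y : Ω → ℝ} (hW : StronglyMeasurable[m'] W)
    (hWb : ∀ᵐ ω ∂P, |W ω| ≤ 1) (hY : Integrable Y P) :
    ∀ᵐ ω ∂P, |(P[W * Y|m]) ω| ≤ (P[fun ω => abs ((P[Y|m']) ω)|m]) ω := by
  have hWm : AEStronglyMeasurable W P := (hW.mono hm').aestronglyMeasurable
  have hWY : Integrable (W * Y) P := hY.bdd_mul hWm hWb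
  have hWY' : Integrable (W * P[Y|m']) P := integrable_condExp.bdd_mul hWm hWb
  have h1 : P[W * Y|m] =ᵐ[P] P[W * P[Y|m']|m] :=
    (condExp_condExp_of_le hm hm').symm.trans
      (condExp_congr_ae (condExp_mul_of_stronglyMeasurable_left hW hWY hY))
  have h2 := abs_condExp_ae_le_condExp_abs (μ := P) (m := m) (W * P[Y|m'])
  have h3 : P[abs (W * P[Y|m'])|m] ≤ᵐ[P] P[fun ω => abs ((P[Y|m']) ω)|m] := by
    refine condExp_mono hWY'.abs integrable_condExp.abs ?_
    filter_upwards [hWb] with ω hω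
    simp only [Pi.abs_apply, Pi.mul_apply, abs_mul]
    exact mul_le_of_le_one_left (abs_nonneg _) hω
  filter_upwards [h1, h2, h3] with ω e1 e2 e3
  rw [e1]
  exact e2.trans e3

/-- The deterministic core of the Chen–Stein argument. For each `α`, `F` at `S` and (when
`x α = 1`) at `S - 1` is compared with `F` at `∑ β ∈ (B α)ᶜ, x β`, the arguments differing by
`∑ β ∈ B α, x β` and `∑ β ∈ (B α).erase α, x β` respectively. -/
lemma stein_pointwise {I : Type*} [Fintype I] [DecidableEq I] (x : I → ℕ)
    (hx : ∀ α, x α ≤ 1) (p : I → ℝ) (hp : ∀ α, 0 ≤ p α)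
    (B : I → Finset I) (hB : ∀ α, α ∈ B α) (F : ℕ → ℝ)
    (hF : ∀ k m : ℕ, |F (k + m) - F k| ≤ m) :
    |((∑ α, p α) * F (∑ α, x α) - ((∑ α, x α : ℕ) : ℝ) * F ((∑ α, x α) - 1)) -
        ∑ α, F (∑ β ∈ (B α)ᶜ, x β) * (p α - x α)| ≤
      ∑ α, ∑ β ∈ B α, p α * x β + ∑ α, ∑ β ∈ (B α).erase α, ((x α * x β : ℕ) : ℝ) := by
  push_cast
  rw [Finset.sum_mul, Finset.sum_mul, ← Finset.sum_sub_distrib, ← Finset.sum_sub_distrib,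
    ← Finset.sum_add_distrib]
  refine (Finset.abs_sum_le_sum_abs _ _).trans (Finset.sum_le_sum fun α _ => ?_)
  have hS : ∑ β, x β = ∑ β ∈ (B α)ᶜ, x β + ∑ β ∈ B α, x β := (Finset.sum_compl_add_sum _ _).symm
  have hS' : ∑ β ∈ B α, x β = ∑ β ∈ (B α).erase α, x β + x α :=
    (Finset.sum_erase_add _ _ (hB α)).symm
  have h1 : |p α * (F (∑ β, x β) - F (∑ β ∈ (B α)ᶜ, x β))| ≤ ∑ β ∈ B α, p α * x β := by
    rw [abs_mul, abs_of_nonneg (hp α), hS, ← Finset.mul_sum]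
    refine mul_le_mul_of_nonneg_left ((hF _ _).trans (by push_cast; rfl)) (hp α)
  have h2 : |(x α : ℝ) * (F (∑ β, x β - 1) - F (∑ β ∈ (B α)ᶜ, x β))| ≤
      ∑ β ∈ (B α).erase α, (x α : ℝ) * x β := by
    rcases Nat.le_one_iff_eq_zero_or_eq_one.1 (hx α) with h | h
    · simp [h]
    · have e : ∑ β, x β - 1 = ∑ β ∈ (B α)ᶜ, x β + ∑ β ∈ (B α).erase α, x β := by omega
      rw [e, h]
      simpa using hF (∑ β ∈ (B α)ᶜ, x β) (∑ β ∈ (B α).erase α, x β)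
  calc _ = |p α * (F (∑ β, x β) - F (∑ β ∈ (B α)ᶜ, x β)) -
        (x α : ℝ) * (F (∑ β, x β - 1) - F (∑ β ∈ (B α)ᶜ, x β))| := by congr 1; ring
    _ ≤ _ := (abs_sub _ _).trans (add_le_add h1 h2)

lemma integrable_X {Ω I : Type*} {mΩ : MeasurableSpace Ω} (P : Measure Ω)
    [IsProbabilityMeasure P] {X : I → Ω → ℕ}
    (hX01 : ∀ α ω, X α ω ≤ 1) (hXmeas : ∀ α, Measurable (X α)) (α : I) :
    Integrable (fun ω => (X α ω : ℝ)) P := by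
  refine Integrable.of_bound (C := 1)
    ((measurable_of_countable (fun n : ℕ => (n : ℝ))).comp (hXmeas α)).aestronglyMeasurable
    (ae_of_all _ fun ω => ?_)
  simpa using hX01 α ω

lemma integrable_XX {Ω I : Type*} {mΩ : MeasurableSpace Ω} (P : Measure Ω)
    [IsProbabilityMeasure P] {X : I → Ω → ℕ}
    (hX01 : ∀ α ω, X α ω ≤ 1) (hXmeas : ∀ α, Measurable (X α)) (α β : I) :
    Integrable (fun ω => ((X α ω * X β ω : ℕ) : ℝ)) P := by
  refine Integrable.of_bound (C := 1) ((measurable_of_countable (fun n : ℕ => (n : ℝ))).comp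
    ((hXmeas α).mul (hXmeas β))).aestronglyMeasurable (ae_of_all _ fun ω => ?_)
  have := Nat.mul_le_mul (hX01 α ω) (hX01 β ω)
  rw [Real.norm_of_nonneg (by positivity)]
  exact_mod_cast this

lemma pA_nonneg {Ω I : Type*} {m𝒜 mΩ : MeasurableSpace Ω} (P : Measure Ω) {X : I → Ω → ℕ}
    (α : I) : ∀ᵐ ω ∂P, 0 ≤ pA m𝒜 P X α ω :=
  condExp_nonneg (ae_of_all _ fun ω => by simp)

lemma abs_pA_le {Ω I : Type*} {m𝒜 mΩ : MeasurableSpace Ω} (P : Measure Ω) {X : I → Ω → ℕ}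
    (hX01 : ∀ α ω, X α ω ≤ 1) (α : I) : ∀ᵐ ω ∂P, |pA m𝒜 P X α ω| ≤ 1 :=
  ae_bdd_abs_condExp_of_ae_bdd_abs (ae_of_all _ fun ω => by simpa using hX01 α ω)

lemma condMean_ae_eq {Ω I : Type*} [Fintype I] {m𝒜 mΩ : MeasurableSpace Ω}
    (P : Measure Ω) [IsProbabilityMeasure P] {X : I → Ω → ℕ}
    (hX01 : ∀ α ω, X α ω ≤ 1) (hXmeas : ∀ α, Measurable (X α)) :
    ∀ᵐ ω ∂P, condMean m𝒜 P X ω = ∑ α, pA m𝒜 P X α ω := by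
  have h := condExp_finsetSum (s := Finset.univ) (fun α _ => integrable_X P hX01 hXmeas α) m𝒜
  have e : (∑ α : I, fun ω => (X α ω : ℝ)) = fun ω => ((∑ α : I, X α ω : ℕ) : ℝ) := by
    funext ω; simp
  rw [e] at h
  filter_upwards [h] with ω hω
  rw [condMean, hω, Finset.sum_apply]; rfl

/-- The remainder of the pointwise estimate has conditional expectation `b₁ + b₂`. -/
lemma condExp_remainder {Ω I : Type*} [Fintype I] [DecidableEq I] {m𝒜 mΩ : MeasurableSpace Ω}
    (P : Measure Ω) [IsProbabilityMeasure P] {X : I → Ω → ℕ}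
    (h𝒜 : m𝒜 ≤ mΩ) (hX01 : ∀ α ω, X α ω ≤ 1)
    (hXmeas : ∀ α, Measurable (X α)) (B : I → Finset I) :
    Integrable (fun ω => ∑ α, ∑ β ∈ B α, pA m𝒜 P X α ω * X β ω +
      ∑ α, ∑ β ∈ (B α).erase α, ((X α ω * X β ω : ℕ) : ℝ)) P ∧
    ∀ᵐ ω ∂P, (P[fun ω => ∑ α, ∑ β ∈ B α, pA m𝒜 P X α ω * X β ω +
      ∑ α, ∑ β ∈ (B α).erase α, ((X α ω * X β ω : ℕ) : ℝ)|m𝒜]) ω =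
        b1 m𝒜 P X B ω + b2 m𝒜 P X B ω := by
  have hpm : ∀ α, StronglyMeasurable[m𝒜] (pA m𝒜 P X α) := fun α => stronglyMeasurable_condExp
  have i1 : ∀ α β, Integrable (pA m𝒜 P X α * fun ω => (X β ω : ℝ)) P := fun α β =>
    (integrable_X P hX01 hXmeas β).bdd_mul ((hpm α).mono h𝒜).aestronglyMeasurable
      (abs_pA_le P hX01 α)
  have i2 := integrable_XX P hX01 hXmeas
  have e : (fun ω => ∑ α, ∑ β ∈ B α, pA m𝒜 P X α ω * X β ω +
      ∑ α, ∑ β ∈ (B α).erase α, ((X α ω * X β ω : ℕ) : ℝ)) =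
      (∑ α, ∑ β ∈ B α, pA m𝒜 P X α * fun ω => (X β ω : ℝ)) +
      ∑ α, ∑ β ∈ (B α).erase α, fun ω => ((X α ω * X β ω : ℕ) : ℝ) := by
    funext ω; simp [Finset.sum_apply]
  have j1 : ∀ α, Integrable (∑ β ∈ B α, pA m𝒜 P X α * fun ω => (X β ω : ℝ)) P :=
    fun α => integrable_finsetSum' _ fun β _ => i1 α β
  have j2 : ∀ α, Integrable (∑ β ∈ (B α).erase α, fun ω => ((X α ω * X β ω : ℕ) : ℝ)) P :=
    fun α => integrable_finsetSum' _ fun β _ => i2 α β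
  have k1 := integrable_finsetSum' Finset.univ fun α _ => j1 α
  have k2 := integrable_finsetSum' Finset.univ fun α _ => j2 α
  rw [e]
  refine ⟨k1.add k2, ?_⟩
  have c1 := ae_all_iff.2 fun α => condExp_finsetSum (s := B α) (fun β _ => i1 α β) m𝒜
  have c2 := ae_all_iff.2 fun α => condExp_finsetSum (s := (B α).erase α) (fun β _ => i2 α β) m𝒜
  have c3 := ae_all_iff.2 fun α => ae_all_iff.2 fun β =>
    condExp_mul_of_stronglyMeasurable_left (m := m𝒜) (hpm α) (i1 α β) (integrable_X P hX01 hXmeas β)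
  filter_upwards [condExp_add k1 k2 m𝒜, condExp_finsetSum (s := Finset.univ) (fun α _ => j1 α) m𝒜,
    condExp_finsetSum (s := Finset.univ) (fun α _ => j2 α) m𝒜, c1, c2, c3] with ω h h1 h2 h3 h4 h5
  rw [h, Pi.add_apply, h1, h2, b1, b2, Finset.sum_apply, Finset.sum_apply]
  congr 1
  · refine Finset.sum_congr rfl fun α _ => ?_
    rw [h3 α, Finset.sum_apply]
    exact Finset.sum_congr rfl fun β _ => h5 α β
  · refine Finset.sum_congr rfl fun α _ => ?_
    rw [h4 α, Finset.sum_apply]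

/-! ### The conditional bound and its integration -/

/-- The conditional Chen–Stein bound: `|E[g(S) - Poi(E[S | 𝒜])(g) | 𝒜]| ≤ b₁ + b₂ + b₃` for a
`[0, 1]`-valued `g` vanishing beyond `M`. -/
lemma abs_condExp_stein_le {Ω : Type*} {I : Type*} [Fintype I] [DecidableEq I]
    {m𝒜 : MeasurableSpace Ω} {mΩ : MeasurableSpace Ω} (h𝒜 : m𝒜 ≤ mΩ)
    (P : Measure Ω) [IsProbabilityMeasure P]
    {X : I → Ω → ℕ} (hX01 : ∀ α ω, X α ω ≤ 1) (hXmeas : ∀ α, Measurable (X α))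
    (B : I → Finset I) (hB : ∀ α, α ∈ B α) (M : ℕ) {g : ℕ → ℝ}
    (hg : ∀ n, M < n → g n = 0) (h0 : ∀ n, 0 ≤ g n) (h1 : ∀ n, g n ≤ 1)
    (hD : Integrable (fun ω => g (∑ α, X α ω) - poisE M (condMean m𝒜 P X ω) g) P) :
    ∀ᵐ ω ∂P, |(P[fun ω => g (∑ α, X α ω) - poisE M (condMean m𝒜 P X ω) g|m𝒜]) ω| ≤
      b1 m𝒜 P X B ω + b2 m𝒜 P X B ω + b3 m𝒜 P X B ω := by
  set D : Ω → ℝ := fun ω => g (∑ α, X α ω) - poisE M (condMean m𝒜 P X ω) g with hDdef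
  set W : I → Ω → ℝ := fun α ω => -steinSol M g (condMean m𝒜 P X ω) (∑ β ∈ (B α)ᶜ, X β ω)
    with hWdef
  set Y : I → Ω → ℝ := fun α ω => (X α ω : ℝ) - pA m𝒜 P X α ω with hYdef
  obtain ⟨hRint, hR⟩ := condExp_remainder P h𝒜 hX01 hXmeas B
  have hpnn := ae_all_iff.2 fun α => pA_nonneg (m𝒜 := m𝒜) P (X := X) α
  have hmean := condMean_ae_eq (m𝒜 := m𝒜) P hX01 hXmeas
  have hlnn : ∀ᵐ ω ∂P, 0 ≤ condMean m𝒜 P X ω := by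
    filter_upwards [hpnn, hmean] with ω a b
    rw [b]; exact Finset.sum_nonneg fun α _ => a α
  have hσ : ∀ α, sigmaB m𝒜 X (B α) ≤ mΩ := fun α =>
    sup_le h𝒜 (iSup₂_le fun β _ => (hXmeas β).comap_le)
  have hW : ∀ α, StronglyMeasurable[sigmaB m𝒜 X (B α)] (W α) := fun α => by
    have hl : Measurable[sigmaB m𝒜 X (B α)] (condMean m𝒜 P X) :=
      (stronglyMeasurable_condExp.measurable).mono le_sup_left le_rfl
    have hV : Measurable[sigmaB m𝒜 X (B α)] (fun ω => ∑ β ∈ (B α)ᶜ, X β ω) := by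
      refine Finset.measurable_fun_sum _ fun β hβ => ?_
      refine measurable_iff_comap_le.2 ?_
      exact le_trans (le_iSup₂_of_le (f := fun (β : I) (_ : β ∉ B α) =>
        MeasurableSpace.comap (X β) inferInstance) β (Finset.mem_compl.1 hβ) le_rfl) le_sup_right
    have := (measurable_steinSol M g).comp (hl.prodMk hV)
    exact this.neg.stronglyMeasurable
  have hWb : ∀ α, ∀ᵐ ω ∂P, |W α ω| ≤ 1 := fun α => by
    filter_upwards [hlnn] with ω a
    simp only [hWdef, abs_neg]
    exact abs_steinSol_le M h0 h1 a _
  have hY : ∀ α, Integrable (Y α) P := fun α =>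
    (integrable_X P hX01 hXmeas α).sub integrable_condExp
  have hWY : ∀ α, Integrable (W α * Y α) P := fun α =>
    (hY α).bdd_mul ((hW α).mono (hσ α)).aestronglyMeasurable (hWb α)
  have hZ := integrable_finsetSum' Finset.univ fun α _ => hWY α
  have hDZ : ∀ᵐ ω ∂P, |(D - ∑ α, W α * Y α) ω| ≤ ∑ α, ∑ β ∈ B α, pA m𝒜 P X α ω * X β ω +
      ∑ α, ∑ β ∈ (B α).erase α, ((X α ω * X β ω : ℕ) : ℝ) := by
    filter_upwards [hpnn, hmean, hlnn] with ω a b c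
    have := stein_pointwise (fun α => X α ω) (fun α => hX01 α ω) (fun α => pA m𝒜 P X α ω) a B hB
      (steinSol M g (condMean m𝒜 P X ω)) (abs_steinSol_add_sub_le M h0 h1 c)
    rw [← b, steinSol_eq M hg] at this
    convert this using 2
    simp only [Pi.sub_apply, Finset.sum_apply, Pi.mul_apply, hDdef, hWdef, hYdef]
    congr 1
    exact Finset.sum_congr rfl fun α _ => by ring
  have e : P[D|m𝒜] =ᵐ[P] P[D - ∑ α, W α * Y α|m𝒜] + P[∑ α, W α * Y α|m𝒜] := by
    have := condExp_add (hD.sub hZ) hZ m𝒜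
    rwa [sub_add_cancel] at this
  have r1 := abs_condExp_ae_le_condExp_abs (μ := P) (m := m𝒜) (D - ∑ α, W α * Y α)
  have r2 := condExp_mono (m := m𝒜) (hD.sub hZ).abs hRint hDZ
  have r3 := ae_all_iff.2 fun α =>
    condExp_mul_abs_le (m := m𝒜) le_sup_left (hσ α) P (hW α) (hWb α) (hY α)
  filter_upwards [e, r1, r2, r3, hR, condExp_finsetSum (s := Finset.univ) (fun α _ => hWY α) m𝒜]
    with ω e r1 r2 r3 r4 r5
  rw [e, Pi.add_apply, ← r4]
  refine (abs_add_le _ _).trans (add_le_add (r1.trans r2) ?_)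
  rw [r5, Finset.sum_apply]
  exact (Finset.abs_sum_le_sum_abs _ _).trans (Finset.sum_le_sum fun α _ => r3 α)

/-- The total variation estimate tested on a bounded set `A`. Boundedness reduces `E[1_A(T) | 𝒜]` to
a finite sum of the given conditional Poisson probabilities. -/
lemma dist_bounded_le {Ω : Type*} {I : Type*} [Fintype I] [DecidableEq I]
    {m𝒜 : MeasurableSpace Ω} {mΩ : MeasurableSpace Ω} (h𝒜 : m𝒜 ≤ mΩ)
    (P : Measure Ω) [IsProbabilityMeasure P]
    {X : I → Ω → ℕ} (hX01 : ∀ α ω, X α ω ≤ 1) (hXmeas : ∀ α, Measurable (X α))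
    (B : I → Finset I) (hB : ∀ α, α ∈ B α)
    {T : Ω → ℕ} (hTmeas : Measurable T)
    (hTpois : ∀ k : ℕ, (P[fun ω => if T ω = k then (1 : ℝ) else 0|m𝒜]) =ᵐ[P]
      fun ω => Real.exp (-(condMean m𝒜 P X ω)) * condMean m𝒜 P X ω ^ k / k.factorial)
    (M : ℕ) (A : Set ℕ) (hA : ∀ n ∈ A, n ≤ M) :
    |(Measure.map (fun ω => ∑ α : I, X α ω) P).real A - (Measure.map T P).real A| ≤
      ∫ ω, min 1 (b1 m𝒜 P X B ω + b2 m𝒜 P X B ω + b3 m𝒜 P X B ω) ∂P := by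
  set g : ℕ → ℝ := A.indicator 1 with hgdef
  have hg : ∀ n, M < n → g n = 0 := fun n hn =>
    Set.indicator_of_notMem (fun h => absurd (hA n h) (by omega)) _
  have h0 : ∀ n, 0 ≤ g n := fun n => Set.indicator_nonneg (fun _ _ => zero_le_one) n
  have h1 : ∀ n, g n ≤ 1 := fun n => Set.indicator_le_self' (fun _ _ => zero_le_one) n
  have hSmeas : Measurable fun ω => ∑ α, X α ω := Finset.measurable_fun_sum _ fun α _ => hXmeas α
  have hgint : ∀ U : Ω → ℕ, Measurable U → Integrable (fun ω => g (U ω)) P := fun U hU =>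
    Integrable.of_bound (C := 1) ((measurable_of_countable g).comp hU).aestronglyMeasurable
      (ae_of_all _ fun ω => by rw [Real.norm_of_nonneg (h0 _)]; exact h1 _)
  have hreal : ∀ U : Ω → ℕ, Measurable U → (Measure.map U P).real A = ∫ ω, g (U ω) ∂P :=
    fun U hU => by
      rw [← integral_map hU.aemeasurable (measurable_of_countable g).aestronglyMeasurable, hgdef,
        integral_indicator_one (DiscreteMeasurableSpace.forall_measurableSet A)]
  have hT : (P[fun ω => g (T ω)|m𝒜]) =ᵐ[P] fun ω => poisE M (condMean m𝒜 P X ω) g := by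
    have e : (fun ω => g (T ω)) = ∑ k ∈ Finset.range (M + 1),
        g k • fun ω => if T ω = k then (1 : ℝ) else 0 := by
      funext ω
      simp only [Finset.sum_apply, Pi.smul_apply, smul_eq_mul, mul_ite, mul_one, mul_zero,
        Finset.sum_ite_eq, Finset.mem_range]
      split_ifs with h
      · rfl
      · exact hg _ (by omega)
    have hi : ∀ k, Integrable (g k • fun ω => if T ω = k then (1 : ℝ) else 0) P := fun k =>
      Integrable.smul _ <| Integrable.of_bound (C := 1)
        ((measurable_of_countable fun n : ℕ => if n = k then (1 : ℝ) else 0).comp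
          hTmeas).aestronglyMeasurable (ae_of_all _ fun ω => by split_ifs <;> simp)
    rw [e]
    filter_upwards [condExp_finsetSum (s := Finset.range (M + 1)) (fun k _ => hi k) m𝒜,
      ae_all_iff.2 fun k => condExp_smul (μ := P) (g k)
        (fun ω => if T ω = k then (1 : ℝ) else 0) m𝒜,
      ae_all_iff.2 hTpois] with ω a b c
    rw [a, Finset.sum_apply, poisE]
    refine Finset.sum_congr rfl fun k _ => ?_
    rw [b k, Pi.smul_apply, c k, smul_eq_mul, mul_comm]
  have hpint : Integrable (fun ω => poisE M (condMean m𝒜 P X ω) g) P :=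
    integrable_condExp.congr hT
  have hTint : ∫ ω, g (T ω) ∂P = ∫ ω, poisE M (condMean m𝒜 P X ω) g ∂P := by
    rw [← integral_congr_ae hT, integral_condExp h𝒜]
  have hD := (hgint _ hSmeas).sub hpint
  have hb := abs_condExp_stein_le h𝒜 P hX01 hXmeas B hB M hg h0 h1 hD
  have hp01 : ∀ᵐ ω ∂P, 0 ≤ poisE M (condMean m𝒜 P X ω) g ∧
      poisE M (condMean m𝒜 P X ω) g ≤ 1 := by
    filter_upwards [hT, condExp_nonneg (m := m𝒜) (μ := P) (ae_of_all P fun ω => h0 (T ω)),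
      ae_bdd_abs_condExp_of_ae_bdd_abs (m := m𝒜) (μ := P) (R := 1) (f := fun ω => g (T ω))
        (ae_of_all P fun ω => by rw [abs_of_nonneg (h0 _)]; exact h1 _)] with ω a b c
    rw [← a]
    exact ⟨b, (le_abs_self _).trans c⟩
  have hone : ∀ᵐ ω ∂P,
      |(P[fun ω => g (∑ α, X α ω) - poisE M (condMean m𝒜 P X ω) g|m𝒜]) ω| ≤ 1 := by
    refine ae_bdd_abs_condExp_of_ae_bdd_abs ?_
    filter_upwards [hp01] with ω a
    have := h0 (∑ α, X α ω)
    have := h1 (∑ α, X α ω)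
    rw [abs_le]; constructor <;> linarith
  have hmeas : AEStronglyMeasurable
      (fun ω => min 1 (b1 m𝒜 P X B ω + b2 m𝒜 P X B ω + b3 m𝒜 P X B ω)) P := by
    have hc : ∀ f : Ω → ℝ, Measurable (P[f|m𝒜]) := fun f =>
      (stronglyMeasurable_condExp.mono h𝒜).measurable
    refine Measurable.aestronglyMeasurable ?_
    refine measurable_const.min ((Measurable.add ?_ ?_).add ?_)
    · exact Finset.measurable_fun_sum _ fun α _ => Finset.measurable_fun_sum _ fun β _ =>
        (hc _).mul (hc _)
    · exact Finset.measurable_fun_sum _ fun α _ => Finset.measurable_fun_sum _ fun β _ => hc _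
    · exact Finset.measurable_fun_sum _ fun α _ => hc _
  have hle : ∀ᵐ ω ∂P,
      |(P[fun ω => g (∑ α, X α ω) - poisE M (condMean m𝒜 P X ω) g|m𝒜]) ω| ≤
        min 1 (b1 m𝒜 P X B ω + b2 m𝒜 P X B ω + b3 m𝒜 P X B ω) := by
    filter_upwards [hb, hone] with ω a b using le_min b a
  have hmint : Integrable
      (fun ω => min 1 (b1 m𝒜 P X B ω + b2 m𝒜 P X B ω + b3 m𝒜 P X B ω)) P := by
    refine Integrable.of_bound (C := 1) hmeas ?_
    filter_upwards [hle] with ω a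
    rw [Real.norm_of_nonneg ((abs_nonneg _).trans a)]
    exact min_le_left _ _
  rw [hreal _ hSmeas, hreal _ hTmeas, hTint, ← integral_sub (hgint _ hSmeas) hpint,
    ← integral_condExp h𝒜]
  exact abs_integral_le_integral_abs.trans (integral_mono_ae integrable_condExp.abs hmint hle)

end ChenStein

end

open MeasureTheory ProbabilityTheory Filter in
/-- **Lemma (conditional Chen–Stein bound).**  With the conditional Chen–Stein setup (finite
index set `I`, sub-σ-field `m𝒜 ≤ mΩ`, Bernoulli variables `X α`, neighbourhoods `B α ∋ α`,
`S = ∑_α X_α`): if the conditional distribution of `T` given `m𝒜` is Poisson with random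
parameter `E[S | 𝒜]`, then `d_TV(S, T) ≤ E[min(1, b₁ + b₂ + b₃)]`. -/
theorem conditional_chen_stein
    {Ω : Type*} {I : Type*} [Fintype I] [DecidableEq I]
    (m𝒜 : MeasurableSpace Ω) {mΩ : MeasurableSpace Ω} (h𝒜 : m𝒜 ≤ mΩ)
    (P : Measure Ω) [IsProbabilityMeasure P]
    (X : I → Ω → ℕ) (hX01 : ∀ α ω, X α ω ≤ 1) (hXmeas : ∀ α, Measurable (X α))
    (B : I → Finset I) (hB : ∀ α, α ∈ B α)
    (T : Ω → ℕ) (hTmeas : Measurable T)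
    (hTpois : ∀ k : ℕ,
      (P[fun ω => if T ω = k then (1 : ℝ) else 0|m𝒜]) =ᵐ[P]
        fun ω => Real.exp (-(ChenStein.condMean m𝒜 P X ω)) *
          ChenStein.condMean m𝒜 P X ω ^ k / k.factorial) :
    ChenStein.dTVNat (Measure.map (fun ω => ∑ α : I, X α ω) P) (Measure.map T P) ≤
      ∫ ω, min 1 (ChenStein.b1 m𝒜 P X B ω + ChenStein.b2 m𝒜 P X B ω +
        ChenStein.b3 m𝒜 P X B ω) ∂P := by
  have hlim : ∀ (μ : Measure ℕ) [IsFiniteMeasure μ] (A : Set ℕ),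
      Tendsto (fun M : ℕ => μ.real (A ∩ Set.Iic M)) atTop (nhds (μ.real A)) := fun μ _ A => by
    have hm : Monotone fun M : ℕ => A ∩ Set.Iic M := fun a b hab =>
      Set.inter_subset_inter_right _ (Set.Iic_subset_Iic.2 hab)
    have h := tendsto_measure_iUnion_atTop (μ := μ) hm
    rw [← Set.inter_iUnion, Set.iUnion_Iic, Set.inter_univ] at h
    exact (ENNReal.tendsto_toReal (measure_ne_top μ A)).comp h
  refine ciSup_le fun A => ?_
  have hSmeas : Measurable fun ω => ∑ α, X α ω := Finset.measurable_fun_sum _ fun α _ => hXmeas α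
  have := Measure.isProbabilityMeasure_map (μ := P) hSmeas.aemeasurable
  have := Measure.isProbabilityMeasure_map (μ := P) hTmeas.aemeasurable
  exact le_of_tendsto' ((hlim _ A).sub (hlim _ A)).abs fun M =>
    ChenStein.dist_bounded_le h𝒜 P hX01 hXmeas B hB hTmeas hTpois M (A ∩ Set.Iic M)
      fun n hn => hn.2
end

section
/- (Poisson Cramér–Wold device.) Let m ≥ 1 and let (Y_n)_{n∈ℕ} with Y_n = (Y_{1,n}, ..., Y_{m,n}) be a sequence of ℕ₀^m-valued random vectors, and let μ_1, ..., μ_m > 0. Suppose that for every q = (q_1,...,q_m) ∈ [0,1]^m, the sum Σ_{i=1}^m Y_{i,n}^{(q_i)} of independently thinned coordinates converges in distribution, as n → ∞, to a Poisson random variable with parameter Σ_{i=1}^m q_i μ_i. Then Y_n converges in distribution to a vector of m independent Poisson random variables with parameters μ_1, ..., μ_m. -/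
/-! Taking `s = 0` in the hypothesis already suffices: no point survives the thinning with
probability `E ∏ (1 - q i) ^ Y i`, so the hypothesis at `s = 0` is pointwise convergence on
`[0,1]^m` of the joint probability generating function of `Y n` to that of independent Poisson
variables (`thinnedSumPMF_zero`, `integral_pow_poissonMeasure`).

Convergence of generating functions gives convergence of the point masses
(`tendsto_real_singleton_of_pgf`) by compactness: `y ↦ (2 ^ (-y i))_i` maps `ℕ^m` into the cube
`[0,1]^m`, and the generating function at `u i = 2 ^ (-k i)` is the `k`-th mixed moment of the
image law. By Stone-Weierstrass, convergence of all mixed moments implies convergence of the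
integrals of all continuous functions on the cube. Each point of the image of `ℕ^m` is isolated in
that image, so its indicator there is the restriction of a continuous function on the cube
(`bump`). -/

open MeasureTheory ProbabilityTheory Filter

noncomputable section

/-- The probability mass function (at `s`) of the sum `∑ i, Y_i^{(q_i)}` of independently
thinned coordinates of an `ℕ^m`-valued random vector `Y`: conditionally on `Y`, the
thinnings are independent with `Y_i^{(q_i)} ~ Bin(Y_i, q_i)`, so that
`P(∑ i, Y_i^{(q_i)} = s) = ∑_y P(Y = y) ∑_{t, ∑ t = s} ∏ i C(y_i, t_i) q_i^{t_i} (1-q_i)^{y_i - t_i}`. -/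
def thinnedSumPMF {Ω : Type*} [MeasurableSpace Ω] (P : Measure Ω) {m : ℕ}
    (Y : Ω → (Fin m → ℕ)) (q : Fin m → ℝ) (s : ℕ) : ℝ :=
  ∑' y : Fin m → ℕ, ∑' t : Fin m → ℕ,
    if (∑ i, t i) = s then
      (P {ω | Y ω = y}).toReal *
        ∏ i, ((y i).choose (t i) : ℝ) * q i ^ t i * (1 - q i) ^ (y i - t i)
    else 0

/-- The map `y ↦ (2 ^ (-y i))_i`, embedding `ℕ^m` as a discrete subset of the cube `[0,1]^m`. -/
def toCube {m : ℕ} (y : Fin m → ℕ) : Fin m → unitInterval :=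
  fun i => ⟨(1 / 2 : ℝ) ^ y i, by positivity, pow_le_one₀ (by norm_num) (by norm_num)⟩

/-- A product of tent functions centred at `toCube y`; the width `2 ^ (-(y i + 1))` of the tents
is the distance from `2 ^ (-y i)` to the nearest other power of `1 / 2`. -/
def bump {m : ℕ} (y : Fin m → ℕ) : C(Fin m → unitInterval, ℝ) where
  toFun x := ∏ i, max 0 (1 - 2 ^ (y i + 1) * |(x i : ℝ) - (1 / 2) ^ y i|)
  continuous_toFun := by fun_prop

lemma one_le_of_ne {k l : ℕ} (hkl : k ≠ l) :
    1 ≤ 2 ^ (l + 1) * |(1 / 2 : ℝ) ^ k - (1 / 2) ^ l| := by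
  have h2 : (2 : ℝ) ^ l * (1 / 2) ^ l = 1 := by rw [← mul_pow]; norm_num
  have hl : (0 : ℝ) < 2 ^ l := by positivity
  rcases lt_or_gt_of_ne hkl with h | h
  · have h1 : (1 / 2 : ℝ) ^ l ≤ (1 / 2) ^ (k + 1) :=
      pow_le_pow_of_le_one (by norm_num) (by norm_num) h
    rw [pow_succ] at h1
    have h3 : (1 / 2 : ℝ) ^ l ≤ |(1 / 2 : ℝ) ^ k - (1 / 2) ^ l| :=
      le_trans (by linarith) (le_abs_self _)
    rw [pow_succ]
    nlinarith
  · have h1 : (1 / 2 : ℝ) ^ k ≤ (1 / 2) ^ (l + 1) :=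
      pow_le_pow_of_le_one (by norm_num) (by norm_num) h
    rw [pow_succ] at h1
    have h3 : (1 / 2 : ℝ) ^ l / 2 ≤ |(1 / 2 : ℝ) ^ k - (1 / 2) ^ l| :=
      le_trans (by linarith) (neg_le_abs _)
    rw [pow_succ]
    nlinarith

lemma bump_toCube {m : ℕ} (y z : Fin m → ℕ) :
    bump y (toCube z) = Set.indicator {y} (fun _ => (1 : ℝ)) z := by
  by_cases h : z = y
  · subst h
    simp [bump, toCube]
  · obtain ⟨i, hi⟩ := Function.ne_iff.mp h
    rw [Set.indicator_of_notMem (by simpa using h)]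
    refine Finset.prod_eq_zero (Finset.mem_univ i) ?_
    have := one_le_of_ne hi
    exact max_eq_left (by simpa [toCube] using this)

/-- The `i`-th coordinate function on the cube. -/
def cubeCoord {m : ℕ} (i : Fin m) : C(Fin m → unitInterval, ℝ) where
  toFun x := x i
  continuous_toFun := by fun_prop

lemma exists_eq_monomial {m : ℕ} {f : C(Fin m → unitInterval, ℝ)}
    (hf : f ∈ Submonoid.closure (Set.range (cubeCoord (m := m)))) :
    ∃ k : Fin m → ℕ, ∀ x, f x = ∏ i, (x i : ℝ) ^ k i := by
  induction hf using Submonoid.closure_induction with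
  | mem f hf =>
    obtain ⟨i, rfl⟩ := hf
    refine ⟨Pi.single i 1, fun x => ?_⟩
    rw [Finset.prod_eq_single i]
    · simp [cubeCoord]
    · intro j _ hj
      simp [hj]
    · simp
  | one => exact ⟨0, by simp⟩
  | mul f g _ _ hf hg =>
    obtain ⟨k, hk⟩ := hf
    obtain ⟨l, hl⟩ := hg
    exact ⟨k + l, fun x => by simp [hk, hl, pow_add, Finset.prod_mul_distrib]⟩

lemma adjoin_cubeCoord_topologicalClosure (m : ℕ) :
    (Algebra.adjoin ℝ (Set.range (cubeCoord (m := m)))).topologicalClosure = ⊤ := by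
  apply ContinuousMap.subalgebra_topologicalClosure_eq_top_of_separatesPoints
  intro x y hxy
  obtain ⟨i, hi⟩ := Function.ne_iff.mp hxy
  exact ⟨cubeCoord i, ⟨cubeCoord i, Algebra.subset_adjoin ⟨i, rfl⟩, rfl⟩,
    fun h => hi (Subtype.ext h)⟩

lemma integrable_comp_toCube {m : ℕ} (ρ : Measure (Fin m → ℕ)) [IsProbabilityMeasure ρ]
    (f : C(Fin m → unitInterval, ℝ)) : Integrable (fun y => f (toCube y)) ρ :=
  Integrable.of_bound .of_discrete ‖f‖ (ae_of_all _ fun _ => f.norm_coe_le_norm _)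

lemma abs_integral_sub_le {m : ℕ} (ρ : Measure (Fin m → ℕ)) [IsProbabilityMeasure ρ]
    (f g : C(Fin m → unitInterval, ℝ)) :
    |∫ y, f (toCube y) ∂ρ - ∫ y, g (toCube y) ∂ρ| ≤ dist f g := by
  rw [← integral_sub (integrable_comp_toCube ρ f) (integrable_comp_toCube ρ g)]
  have := norm_integral_le_of_norm_le_const (μ := ρ)
    (f := fun y => f (toCube y) - g (toCube y)) (C := dist f g)
    (ae_of_all _ fun y => by rw [← dist_eq_norm]; exact ContinuousMap.dist_apply_le_dist _)
  simpa using this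

/-- Continuity theorem for joint generating functions: pointwise convergence on `[0,1]^m` to the
generating function of a probability measure implies convergence of the point masses. -/
lemma tendsto_real_singleton_of_pgf {m : ℕ} (ρ : ℕ → Measure (Fin m → ℕ))
    [∀ n, IsProbabilityMeasure (ρ n)] (ν : Measure (Fin m → ℕ)) [IsProbabilityMeasure ν]
    (h : ∀ u : Fin m → ℝ, (∀ i, u i ∈ Set.Icc (0 : ℝ) 1) →
      Tendsto (fun n => ∫ y, ∏ i, u i ^ y i ∂(ρ n)) atTop (nhds (∫ y, ∏ i, u i ^ y i ∂ν)))
    (y : Fin m → ℕ) : Tendsto (fun n => (ρ n).real {y}) atTop (nhds (ν.real {y})) := by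
  have hpoly : ∀ f ∈ Algebra.adjoin ℝ (Set.range (cubeCoord (m := m))),
      Tendsto (fun n => ∫ y, f (toCube y) ∂(ρ n)) atTop (nhds (∫ y, f (toCube y) ∂ν)) := by
    intro f hf
    rw [← Subalgebra.mem_toSubmodule, Algebra.adjoin_eq_span] at hf
    induction hf using Submodule.span_induction with
    | mem f hf =>
      obtain ⟨k, hk⟩ := exists_eq_monomial hf
      have key : ∀ z : Fin m → ℕ, f (toCube z) = ∏ i, ((1 / 2 : ℝ) ^ k i) ^ z i := by
        intro z
        rw [hk]
        exact Finset.prod_congr rfl fun i _ => pow_right_comm _ _ _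
      simp only [key]
      exact h _ fun i => ⟨by positivity, pow_le_one₀ (by norm_num) (by norm_num)⟩
    | zero => simp
    | add f g _ _ hf hg =>
      have := hf.add hg
      simp_rw [← integral_add (integrable_comp_toCube _ f) (integrable_comp_toCube _ g)] at this
      exact this
    | smul c f _ hf =>
      have := hf.const_mul c
      simp_rw [← integral_const_mul] at this
      exact this
  have hcont : ∀ f : C(Fin m → unitInterval, ℝ),
      Tendsto (fun n => ∫ y, f (toCube y) ∂(ρ n)) atTop (nhds (∫ y, f (toCube y) ∂ν)) := by
    intro f
    have hf : f ∈ closure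
        (Algebra.adjoin ℝ (Set.range (cubeCoord (m := m))) : Set C(Fin m → unitInterval, ℝ)) := by
      rw [← Subalgebra.topologicalClosure_coe, adjoin_cubeCoord_topologicalClosure]
      trivial
    rw [Metric.tendsto_atTop]
    intro ε hε
    obtain ⟨g, hg, hfg⟩ := Metric.mem_closure_iff.mp hf (ε / 3) (by positivity)
    obtain ⟨N, hN⟩ := Metric.tendsto_atTop.mp (hpoly g hg) (ε / 3) (by positivity)
    refine ⟨N, fun n hn => ?_⟩
    have h1 := abs_le.mp (abs_integral_sub_le (ρ n) f g)
    have h2 := abs_le.mp (abs_integral_sub_le ν f g)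
    have h3 := abs_lt.mp (hN n hn)
    exact abs_lt.mpr ⟨by linarith [h1.1, h2.2, h3.1], by linarith [h1.2, h2.1, h3.2]⟩
  have hb := hcont (bump y)
  have hind : ∀ κ : Measure (Fin m → ℕ), ∫ z, bump y (toCube z) ∂κ = κ.real {y} := by
    intro κ
    simp_rw [bump_toCube]
    rw [integral_indicator_const _ (measurableSet_singleton y), smul_eq_mul, mul_one]
  simpa only [hind] using hb

/-- The probability that no point survives the thinning is the joint generating function at
`1 - q`. -/
lemma thinnedSumPMF_zero {Ω : Type*} [MeasurableSpace Ω] (P : Measure Ω) [IsProbabilityMeasure P]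
    {m : ℕ} (Y : Ω → (Fin m → ℕ)) (hY : Measurable Y) (q : Fin m → ℝ)
    (hq : ∀ i, q i ∈ Set.Icc (0 : ℝ) 1) :
    thinnedSumPMF P Y q 0 = ∫ y, ∏ i, (1 - q i) ^ y i ∂(P.map Y) := by
  have : IsProbabilityMeasure (P.map Y) := Measure.isProbabilityMeasure_map hY.aemeasurable
  have hint : Integrable (fun y : Fin m → ℕ => ∏ i, (1 - q i) ^ y i) (P.map Y) := by
    refine Integrable.of_bound .of_discrete 1 (ae_of_all _ fun y => ?_)
    have h0 : ∀ i, 0 ≤ 1 - q i := fun i => by linarith [(hq i).2]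
    rw [Real.norm_of_nonneg (Finset.prod_nonneg fun i _ => pow_nonneg (h0 i) _)]
    exact Finset.prod_le_one (fun i _ => pow_nonneg (h0 i) _)
      fun i _ => pow_le_one₀ (h0 i) (by linarith [(hq i).1])
  rw [integral_countable hint, thinnedSumPMF]
  refine tsum_congr fun y => ?_
  rw [tsum_eq_single 0]
  · rw [if_pos (by simp), measureReal_def, Measure.map_apply hY (measurableSet_singleton y)]
    simp [Set.preimage]
  · intro t ht
    refine if_neg fun h => ht ?_
    ext i
    simpa using Finset.sum_eq_zero_iff.mp h i (Finset.mem_univ i)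

lemma integral_pow_poissonMeasure (r : NNReal) (u : ℝ) :
    ∫ k, u ^ k ∂(poissonMeasure r) = Real.exp (-((1 - u) * r)) := by
  rw [integral_poissonMeasure]
  have h1 := (NormedSpace.expSeries_div_hasSum_exp ((r : ℝ) * u)).mul_left (Real.exp (-r))
  rw [← Real.exp_eq_exp_ℝ, ← Real.exp_add] at h1
  convert h1.tsum_eq using 1
  · refine tsum_congr fun k => ?_
    rw [smul_eq_mul, mul_pow]
    ring
  · congr 1
    ring

/-- **Corollary (Poisson Cramér–Wold device).**  Let `(Y n)` be a sequence of `ℕ^m`-valued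
random vectors and `μ 0, ..., μ (m-1) > 0`.  If for every `q ∈ [0,1]^m` the sum of the
independently thinned coordinates converges in distribution to a Poisson random variable
with parameter `∑ i, q i * μ i` (expressed on the discrete space `ℕ` by convergence of the
probability mass functions), then `Y n` converges in distribution to a vector of `m`
independent Poisson random variables with parameters `μ i` (expressed by convergence of the
joint probability mass function to the product of Poisson probability mass functions). -/
theorem poisson_cramer_wold
    {Ω : Type*} [MeasurableSpace Ω] (P : Measure Ω) [IsProbabilityMeasure P]
    (m : ℕ) (hm : 1 ≤ m) (Y : ℕ → Ω → (Fin m → ℕ)) (hYmeas : ∀ n, Measurable (Y n))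
    (μ : Fin m → ℝ) (hμ : ∀ i, 0 < μ i)
    (h : ∀ q : Fin m → ℝ, (∀ i, q i ∈ Set.Icc (0 : ℝ) 1) → ∀ s : ℕ,
      Tendsto (fun n => thinnedSumPMF P (Y n) q s) atTop
        (nhds (Real.exp (-(∑ i, q i * μ i)) * (∑ i, q i * μ i) ^ s / s.factorial))) :
    ∀ y : Fin m → ℕ,
      Tendsto (fun n => (P {ω | Y n ω = y}).toReal) atTop
        (nhds (∏ i, Real.exp (-μ i) * μ i ^ y i / (y i).factorial)) := by
  intro y
  let r : Fin m → NNReal := fun i => ⟨μ i, (hμ i).le⟩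
  have hr : ∀ i, (r i : ℝ) = μ i := fun i => rfl
  have : ∀ n, IsProbabilityMeasure (P.map (Y n)) := fun n =>
    Measure.isProbabilityMeasure_map (hYmeas n).aemeasurable
  have key := tendsto_real_singleton_of_pgf (fun n => P.map (Y n))
    (Measure.pi fun i => poissonMeasure (r i)) (fun u hu => by
      have hq : ∀ i, 1 - u i ∈ Set.Icc (0 : ℝ) 1 := fun i =>
        ⟨by linarith [(hu i).2], by linarith [(hu i).1]⟩
      have h0 := h (fun i => 1 - u i) hq 0
      simp_rw [thinnedSumPMF_zero P _ (hYmeas _) _ hq, sub_sub_cancel] at h0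
      convert h0 using 2
      rw [integral_fintype_prod_eq_prod (fun i k => u i ^ k)]
      simp_rw [integral_pow_poissonMeasure, hr, ← Real.exp_sum]
      simp) y
  convert key using 2
  · rename_i n
    rw [measureReal_def, Measure.map_apply (hYmeas n) (measurableSet_singleton y)]
    rfl
  · rw [measureReal_def, Measure.pi_singleton, ENNReal.toReal_prod]
    refine Finset.prod_congr rfl fun i _ => ?_
    rw [← measureReal_def, poissonMeasure_real_singleton, hr]

end
end
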